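/- Suppose (A_i)_{i ∈ I} is a family of pairwise disjoint nonempty Borel subsets of ℝ whose union is ℝ, and each A_i is closed under addition. Then the cardinality κ of I satisfies: κ ∈ {1, 2, 3}, or κ ≥ cov(𝒩) and κ ≥ cov(ℳ). -/

import Mathlib

/-- `cov(𝒩)`: the least cardinality of a family of Lebesgue null subsets of `ℝ` covering `ℝ`. -/
noncomputable def covNull : Cardinal :=
  sInf { c : Cardinal | ∃ S : Set (Set ℝ), Cardinal.mk S = c ∧
    (∀ A ∈ S, MeasureTheory.volume A = 0) ∧ ⋃₀ S = Set.univ }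

/-- `cov(ℳ)`: the least cardinality of a family of meager subsets of `ℝ` covering `ℝ`. -/
noncomputable def covMeager : Cardinal :=
  sInf { c : Cardinal | ∃ S : Set (Set ℝ), Cardinal.mk S = c ∧
    (∀ A ∈ S, IsMeagre A) ∧ ⋃₀ S = Set.univ }

/-!
For an index `i`, if `x` lies in the `j`-th piece then so does every positive multiple `n • x`;
hence `n • x ∈ A i` forces `x ∈ A i`, and each piece is invariant under positive rational scaling.
By Steinhaus and Pettis, a piece whose positive part `S` is not null (or not meager) contains the
nonempty open set `interior (S + S)`, and the rational multiples of an open set of positive reals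
exhaust the half-line. So either one piece contains `(0, ∞)`, or the sets `A i ∩ (0, ∞)` are all
small; the latter, together with their reflections and `{0}`, cover `ℝ`. The same holds for
`(-∞, 0)`, and if both half-lines lie in a single piece each, at most the piece of `0` is left over.
-/

open Filter MeasureTheory Set Topology
open scoped Cardinal Function Pointwise

universe u

section SumsOfLargeSets

variable {G : Type*} [AddGroup G] {S T : Set G}

theorem exists_measure_inter_preimage_neg_add_ne_zero [MeasurableSpace G] [MeasurableAdd₂ G]
    [MeasurableNeg G] (μ : Measure G) [SFinite μ] [μ.IsAddLeftInvariant]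
    (hS : MeasurableSet S) (hT : MeasurableSet T) (hμS : μ S ≠ 0) (hμT : μ T ≠ 0) :
    ∃ t, μ (S ∩ (fun x ↦ -x + t) ⁻¹' T) ≠ 0 := by
  by_contra! hnull
  set P : Set (G × G) := {p | p.1 ∈ S ∧ -p.1 + p.2 ∈ T}
  have hP : MeasurableSet P := (hS.preimage measurable_fst).inter (hT.preimage (by fun_prop))
  have hP_null : μ.prod μ P = 0 := by
    rw [Measure.prod_apply_symm hP]
    exact (lintegral_congr hnull).trans lintegral_zero
  have hP_shear : (fun p : G × G ↦ (p.1, p.1 + p.2)) ⁻¹' P = S ×ˢ T := by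
    ext p
    simp [P]
  have hP_prod : μ.prod μ P = μ S * μ T := by
    rw [← (measurePreserving_prod_add μ μ).measure_preimage hP.nullMeasurableSet, hP_shear,
      Measure.prod_prod]
  exact mul_ne_zero hμS hμT (hP_prod.symm.trans hP_null)

variable [TopologicalSpace G] [IsTopologicalAddGroup G]

theorem interior_add_nonempty_of_measure_ne_zero [LocallyCompactSpace G]
    [SecondCountableTopology G] [MeasurableSpace G] [BorelSpace G] (μ : Measure G)
    [μ.IsAddHaarMeasure] (hS : NullMeasurableSet S μ) (hT : NullMeasurableSet T μ)
    (hμS : μ S ≠ 0) (hμT : μ T ≠ 0) : (interior (S + T)).Nonempty := by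
  obtain ⟨S', hS'S, hS', hS'_ae⟩ := hS.exists_measurable_subset_ae_eq
  obtain ⟨T', hT'T, hT', hT'_ae⟩ := hT.exists_measurable_subset_ae_eq
  obtain ⟨t, ht⟩ := exists_measure_inter_preimage_neg_add_ne_zero μ hS' hT'
    (by rwa [measure_congr hS'_ae]) (by rwa [measure_congr hT'_ae])
  set E := S' ∩ (fun x ↦ -x + t) ⁻¹' T'
  have hE : MeasurableSet E := hS'.inter (hT'.preimage (by fun_prop))
  have hE_nhds : E - E ∈ 𝓝 (0 : G) :=
    Measure.sub_mem_nhds_zero_of_addHaar_pos μ E hE (pos_iff_ne_zero.mpr ht)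
  have htranslate : Tendsto (fun y ↦ y - t) (𝓝 t) (𝓝 0) :=
    tendsto_sub_nhds_zero_iff.mpr tendsto_id
  refine ⟨t, mem_interior_iff_mem_nhds.mpr ?_⟩
  filter_upwards [htranslate hE_nhds] with y ⟨a, ha, b, hb, (hab : a - b = y - t)⟩
  refine ⟨a, hS'S ha.1, -b + t, hT'T hb.2, ?_⟩
  calc a + (-b + t) = a - b + t := by rw [sub_eq_add_neg, add_assoc]
    _ = y := by rw [hab, sub_add_cancel]

theorem nonempty_of_residualEq_of_not_isMeagre {X : Type*} [TopologicalSpace X] {s t : Set X}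
    (hst : s =ᵇ t) (hs : ¬ IsMeagre s) : t.Nonempty := by
  rw [nonempty_iff_ne_empty]
  rintro rfl
  exact hs (eventuallyEq_empty.mp hst)

theorem interior_add_nonempty_of_not_isMeagre [BaireSpace G] (hS : BaireMeasurableSet S)
    (hT : BaireMeasurableSet T) (hS_meagre : ¬ IsMeagre S) (hT_meagre : ¬ IsMeagre T) :
    (interior (S + T)).Nonempty := by
  obtain ⟨U, hU, hSU⟩ := hS.residualEq_isOpen
  obtain ⟨V, hV, hTV⟩ := hT.residualEq_isOpen
  have hUV : (U + V).Nonempty := (nonempty_of_residualEq_of_not_isMeagre hSU hS_meagre).add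
    (nonempty_of_residualEq_of_not_isMeagre hTV hT_meagre)
  refine hUV.mono (interior_maximal ?_ hU.add_right)
  rintro _ ⟨u, hu, v, hv, rfl⟩
  let reflect : G ≃ₜ G := (Homeomorph.neg G).trans (Homeomorph.addRight (u + v))
  have hW : IsOpen (U ∩ reflect ⁻¹' V) := hU.inter (hV.preimage reflect.continuous)
  have hW_nonempty : (U ∩ reflect ⁻¹' V).Nonempty := ⟨u, hu, by simpa [reflect] using hv⟩
  have hTV_reflect : reflect ⁻¹' T =ᵇ reflect ⁻¹' V :=
    (tendsto_residual_of_isOpenMap reflect.continuous reflect.isOpenMap).eventually hTV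
  obtain ⟨x, hxS, hxT⟩ := nonempty_of_residualEq_of_not_isMeagre (hSU.inter hTV_reflect).symm
    (not_isMeagre_of_isOpen hW hW_nonempty)
  exact ⟨x, hxS, reflect x, hxT, by simp [reflect]⟩

end SumsOfLargeSets

/-- A filter of large sets, such as the conull or the comeager sets, whose dual ideal of negligible
sets is symmetric and for which every measurable non-negligible set `s` has a self-sum `s + s` with
nonempty interior. "Measurable" means equal to a Borel set up to a negligible set, and `s` is
non-negligible when its points occur frequently along `l`. -/
structure IsSteinhausFilter {G : Type*} [AddGroup G] [TopologicalSpace G] (l : Filter G)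
    [CountableInterFilter l] : Prop where
  tendsto_neg : Tendsto Neg.neg l l
  interior_add_self_nonempty : ∀ s, EventuallyMeasurableSet (borel G) l s → (∃ᶠ x in l, x ∈ s) →
    (interior (s + s)).Nonempty

section SteinhausFilter

variable {G : Type*} [AddGroup G] [TopologicalSpace G]

theorem isSteinhausFilter_ae [IsTopologicalAddGroup G] [LocallyCompactSpace G]
    [SecondCountableTopology G] [MeasurableSpace G] [BorelSpace G] (μ : Measure G)
    [μ.IsAddHaarMeasure] : IsSteinhausFilter (ae μ) where
  tendsto_neg := (quasiMeasurePreserving_neg μ).tendsto_ae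
  interior_add_self_nonempty s hs hfreq := by
    rw [← BorelSpace.measurable_eq] at hs
    have hμs : μ s ≠ 0 := frequently_ae_mem_iff.mp hfreq
    exact interior_add_nonempty_of_measure_ne_zero μ hs hs hμs hμs

theorem isSteinhausFilter_residual [IsTopologicalAddGroup G] [BaireSpace G] :
    IsSteinhausFilter (residual G) where
  tendsto_neg := tendsto_residual_of_isOpenMap continuous_neg (Homeomorph.neg G).isOpenMap
  interior_add_self_nonempty _ hs hfreq :=
    interior_add_nonempty_of_not_isMeagre hs hs hfreq hfreq

variable {l : Filter G} [CountableInterFilter l]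

theorem IsSteinhausFilter.compl_singleton_zero_mem [T1Space G] [(𝓝[≠] (0 : G)).NeBot]
    (hl : IsSteinhausFilter l) : {0}ᶜ ∈ l := by
  borelize G
  by_contra hzero
  obtain ⟨x, hx⟩ := hl.interior_add_self_nonempty {0}
    (measurableSet_singleton 0).eventuallyMeasurableSet hzero
  simp at hx

theorem IsSteinhausFilter.eventuallyMeasurableSet_neg [ContinuousNeg G]
    (hl : IsSteinhausFilter l) {s : Set G} (hs : EventuallyMeasurableSet (borel G) l s) :
    EventuallyMeasurableSet (borel G) l (-s) := by
  borelize G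
  obtain ⟨t, ht, hst⟩ := hs
  exact ⟨-t, ht.neg, hl.tendsto_neg.eventually hst⟩

end SteinhausFilter

/-- The least number of `l`-negligible sets, that is, complements of members of `l`, needed to
cover the whole space: the covering number of the ideal dual to `l`. -/
noncomputable def coveringNumber {α : Type*} (l : Filter α) : Cardinal :=
  sInf {c | ∃ S : Set (Set α), #S = c ∧ (∀ s ∈ S, sᶜ ∈ l) ∧ ⋃₀ S = univ}

theorem covNull_eq_coveringNumber : covNull = coveringNumber (ae (volume : Measure ℝ)) := by
  simp only [covNull, coveringNumber, compl_mem_ae_iff]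

theorem covMeager_eq_coveringNumber : covMeager = coveringNumber (residual ℝ) := rfl

theorem coveringNumber_le_mk {α ι : Type u} {l : Filter α} {B : ι → Set α}
    (hB : ∀ i, (B i)ᶜ ∈ l) (hcover : ⋃ i, B i = univ) : coveringNumber l ≤ #ι :=
  calc coveringNumber l ≤ #(range B) :=
        csInf_le' ⟨range B, rfl, forall_mem_range.mpr hB, (sUnion_range B).trans hcover⟩
    _ ≤ #ι := Cardinal.mk_range_le

theorem IsSteinhausFilter.coveringNumber_le_mk_of_Ioi_subset_iUnion {ι : Type} {l : Filter ℝ}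
    [CountableInterFilter l] (hl : IsSteinhausFilter l) {B : ι → Set ℝ}
    (hB : ∀ i, (B i)ᶜ ∈ l) (hcover : Ioi 0 ⊆ ⋃ i, B i) : coveringNumber l ≤ #ι := by
  refine coveringNumber_le_mk (B := fun i ↦ B i ∪ -B i ∪ {0}) (fun i ↦ ?_)
    (iUnion_eq_univ_iff.mpr fun x ↦ ?_)
  · rw [compl_union, compl_union]
    exact inter_mem (inter_mem (hB i) (hl.tendsto_neg (hB i))) hl.compl_singleton_zero_mem
  · rcases lt_trichotomy x 0 with hx | rfl | hx
    · obtain ⟨i, hi⟩ := mem_iUnion.mp (hcover (neg_pos.mpr hx))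
      exact ⟨i, .inl (.inr hi)⟩
    · obtain ⟨i, -⟩ := mem_iUnion.mp (hcover (zero_lt_one' ℝ))
      exact ⟨i, .inr rfl⟩
    · obtain ⟨i, hi⟩ := mem_iUnion.mp (hcover hx)
      exact ⟨i, .inl (.inl hi)⟩

/-- `A` is an indexed partition of `V` into nonempty sets closed under addition. -/
structure IsAddClosedPartition {ι V : Type*} [Add V] (A : ι → Set V) : Prop where
  nonempty : ∀ i, (A i).Nonempty
  pairwise_disjoint : Pairwise (Disjoint on A)
  iUnion_eq_univ : ⋃ i, A i = univ
  add_mem : ∀ i, ∀ x ∈ A i, ∀ y ∈ A i, x + y ∈ A i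

namespace IsAddClosedPartition

section Algebra

variable {ι V : Type*} {A : ι → Set V} {i j : ι} {x : V}

theorem exists_mem [Add V] (hA : IsAddClosedPartition A) (x : V) : ∃ i, x ∈ A i :=
  iUnion_eq_univ_iff.mp hA.iUnion_eq_univ x

theorem eq_of_mem [Add V] (hA : IsAddClosedPartition A) (hi : x ∈ A i) (hj : x ∈ A j) : i = j :=
  hA.pairwise_disjoint.eq (not_disjoint_iff.mpr ⟨x, hi, hj⟩)

protected theorem neg [SubtractionCommMonoid V] (hA : IsAddClosedPartition A) :
    IsAddClosedPartition fun i ↦ -A i where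
  nonempty i := (hA.nonempty i).neg
  pairwise_disjoint _ _ hij := (hA.pairwise_disjoint hij).preimage Neg.neg
  iUnion_eq_univ := by rw [← iUnion_neg, hA.iUnion_eq_univ, neg_univ]
  add_mem i x hx y hy := by
    rw [Set.mem_neg, neg_add]
    exact hA.add_mem i _ hx _ hy

theorem nsmul_mem [AddMonoid V] (hA : IsAddClosedPartition A) {n : ℕ} (hn : n ≠ 0)
    (hx : x ∈ A i) : n • x ∈ A i := by
  obtain ⟨n, rfl⟩ := Nat.exists_eq_succ_of_ne_zero hn
  clear hn
  induction n with
  | zero => rwa [one_nsmul]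
  | succ n ih =>
    rw [succ_nsmul]
    exact hA.add_mem i _ ih _ hx

theorem nsmul_mem_iff [AddMonoid V] (hA : IsAddClosedPartition A) {n : ℕ} (hn : n ≠ 0) :
    n • x ∈ A i ↔ x ∈ A i := by
  refine ⟨fun hnx ↦ ?_, hA.nsmul_mem hn⟩
  obtain ⟨j, hj⟩ := hA.exists_mem x
  obtain rfl := hA.eq_of_mem hnx (hA.nsmul_mem hn hj)
  exact hj

theorem nnrat_smul_mem_iff [AddCommMonoid V] [Module ℚ≥0 V] (hA : IsAddClosedPartition A)
    {q : ℚ≥0} (hq : q ≠ 0) : q • x ∈ A i ↔ x ∈ A i := by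
  have hden_smul : q.den • q • x = q.num • x := by
    rw [← Nat.cast_smul_eq_nsmul ℚ≥0, smul_smul, NNRat.den_mul_eq_num, Nat.cast_smul_eq_nsmul]
  rw [← hA.nsmul_mem_iff q.den_ne_zero, hden_smul, hA.nsmul_mem_iff (NNRat.num_ne_zero.mpr hq)]

end Algebra

section Real

variable {ι : Type*} {A : ι → Set ℝ} {i j : ι}

theorem Ioi_zero_subset_of_mem_interior (hA : IsAddClosedPartition A) {x : ℝ} (hx : 0 < x)
    (hxA : x ∈ interior (A i)) : Ioi 0 ⊆ A i := by
  intro y (hy : 0 < y)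
  have hopen : IsOpen (Ioi 0 ∩ (fun t : ℝ ↦ t * y) ⁻¹' interior (A i)) :=
    isOpen_Ioi.inter (isOpen_interior.preimage (continuous_mul_const y))
  obtain ⟨q, (hq : (0 : ℝ) < q), hqy⟩ := Rat.denseRange_cast.exists_mem_open hopen
    ⟨x / y, div_pos hx hy, by simpa [hy.ne'] using hxA⟩
  have hq_pos : 0 < q := Rat.cast_pos.mp hq
  lift q to ℚ≥0 using hq_pos.le
  rw [← hA.nnrat_smul_mem_iff (NNRat.coe_pos.mp hq_pos).ne', NNRat.smul_def]
  exact interior_subset hqy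

theorem mk_le_three_of_Ioi_subset_of_Iio_subset (hA : IsAddClosedPartition A)
    (hi : Ioi 0 ⊆ A i) (hj : Iio 0 ⊆ A j) : #ι ≤ 3 := by
  obtain ⟨k, hk⟩ := hA.exists_mem 0
  have hsurj : Function.Surjective ![i, j, k] := fun m ↦ by
    obtain ⟨x, hx⟩ := hA.nonempty m
    rcases lt_trichotomy x 0 with hx_neg | rfl | hx_pos
    · exact ⟨1, hA.eq_of_mem (hj hx_neg) hx⟩
    · exact ⟨2, hA.eq_of_mem hk hx⟩
    · exact ⟨0, hA.eq_of_mem (hi hx_pos) hx⟩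
  simpa using Cardinal.mk_le_of_surjective (hsurj.comp Equiv.ulift.surjective)

theorem Ioi_zero_subset_of_frequently (hA : IsAddClosedPartition A) {l : Filter ℝ}
    [CountableInterFilter l] (hl : IsSteinhausFilter l)
    (hi : EventuallyMeasurableSet (borel ℝ) l (A i)) (hfreq : ∃ᶠ x in l, x ∈ A i ∩ Ioi 0) :
    Ioi 0 ⊆ A i := by
  obtain ⟨x, hx⟩ := hl.interior_add_self_nonempty (A i ∩ Ioi 0)
    (MeasurableSet.inter hi measurableSet_Ioi.eventuallyMeasurableSet) hfreq
  have hsum : A i ∩ Ioi 0 + A i ∩ Ioi 0 ⊆ A i ∩ Ioi 0 := by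
    rintro _ ⟨a, ⟨ha, ha_pos⟩, b, ⟨hb, hb_pos⟩, rfl⟩
    exact ⟨hA.add_mem i a ha b hb, add_pos (mem_Ioi.mp ha_pos) hb_pos⟩
  exact hA.Ioi_zero_subset_of_mem_interior (hsum (interior_subset hx)).2
    (interior_mono (hsum.trans inter_subset_left) hx)

end Real

section CoveringNumber

variable {ι : Type} {A : ι → Set ℝ} {l : Filter ℝ} [CountableInterFilter l]

theorem exists_Ioi_zero_subset_or_coveringNumber_le_mk (hA : IsAddClosedPartition A)
    (hl : IsSteinhausFilter l) (hmeas : ∀ i, EventuallyMeasurableSet (borel ℝ) l (A i)) :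
    (∃ i, Ioi 0 ⊆ A i) ∨ coveringNumber l ≤ #ι := by
  by_cases hsmall : ∀ i, (A i ∩ Ioi 0)ᶜ ∈ l
  · right
    refine hl.coveringNumber_le_mk_of_Ioi_subset_iUnion hsmall ?_
    rw [← iUnion_inter, hA.iUnion_eq_univ, univ_inter]
  · left
    obtain ⟨i, hi⟩ := not_forall.mp hsmall
    exact ⟨i, hA.Ioi_zero_subset_of_frequently hl (hmeas i) hi⟩

theorem mk_le_three_or_coveringNumber_le_mk (hA : IsAddClosedPartition A)
    (hl : IsSteinhausFilter l) (hmeas : ∀ i, EventuallyMeasurableSet (borel ℝ) l (A i)) :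
    #ι ≤ 3 ∨ coveringNumber l ≤ #ι := by
  obtain ⟨i, hi⟩ | hcov := hA.exists_Ioi_zero_subset_or_coveringNumber_le_mk hl hmeas
  · obtain ⟨j, hj⟩ | hcov := hA.neg.exists_Ioi_zero_subset_or_coveringNumber_le_mk hl
      fun i ↦ hl.eventuallyMeasurableSet_neg (hmeas i)
    · have hj_neg : Iio 0 ⊆ A j := by simpa using neg_subset_neg.mpr hj
      exact .inl (hA.mk_le_three_of_Ioi_subset_of_Iio_subset hi hj_neg)
    · exact .inr hcov
  · exact .inr hcov

end CoveringNumber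

end IsAddClosedPartition

theorem mk_eq_one_or_two_or_three_of_le_three {α : Type u} [Nonempty α] (h : #α ≤ 3) :
    #α = 1 ∨ #α = 2 ∨ #α = 3 := by
  obtain ⟨n, hn⟩ := Cardinal.lt_aleph0.mp (h.trans_lt (Cardinal.natCast_lt_aleph0 (n := 3)))
  have hpos : #α ≠ 0 := Cardinal.mk_ne_zero α
  rw [hn] at h hpos ⊢
  norm_cast at h hpos ⊢
  omega

theorem stmt_6_general {ι : Type} (A : ι → Set ℝ)
    (hnull : ∀ i, NullMeasurableSet (A i))
    (hbaire : ∀ i, BaireMeasurableSet (A i))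
    (hne : ∀ i, (A i).Nonempty)
    (hdisj : Pairwise (Function.onFun Disjoint A))
    (hcover : (⋃ i, A i) = Set.univ)
    (hadd : ∀ i, ∀ x ∈ A i, ∀ y ∈ A i, x + y ∈ A i) :
    Cardinal.mk ι = 1 ∨ Cardinal.mk ι = 2 ∨ Cardinal.mk ι = 3 ∨
      (covNull ≤ Cardinal.mk ι ∧ covMeager ≤ Cardinal.mk ι) := by
  have hA : IsAddClosedPartition A := ⟨hne, hdisj, hcover, hadd⟩
  obtain ⟨i, -⟩ := hA.exists_mem 0
  have : Nonempty ι := ⟨i⟩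
  by_cases hle : #ι ≤ 3
  · have := mk_eq_one_or_two_or_three_of_le_three hle
    tauto
  · rw [covNull_eq_coveringNumber, covMeager_eq_coveringNumber]
    refine .inr (.inr (.inr ⟨?_, ?_⟩))
    · exact (hA.mk_le_three_or_coveringNumber_le_mk (isSteinhausFilter_ae volume)
        hnull).resolve_left hle
    · exact (hA.mk_le_three_or_coveringNumber_le_mk isSteinhausFilter_residual
        hbaire).resolve_left hle

/-- If `ℝ` is partitioned into nonempty Borel sets closed under addition, then the number of
pieces is `1`, `2`, `3`, or at least `max(cov(𝒩), cov(ℳ))`. -/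
theorem stmt_6 {ι : Type} (A : ι → Set ℝ)
    (hmeas : ∀ i, MeasurableSet (A i))
    (hne : ∀ i, (A i).Nonempty)
    (hdisj : Pairwise (Function.onFun Disjoint A))
    (hcover : (⋃ i, A i) = Set.univ)
    (hadd : ∀ i, ∀ x ∈ A i, ∀ y ∈ A i, x + y ∈ A i) :
    Cardinal.mk ι = 1 ∨ Cardinal.mk ι = 2 ∨ Cardinal.mk ι = 3 ∨
      (covNull ≤ Cardinal.mk ι ∧ covMeager ≤ Cardinal.mk ι) :=
  stmt_6_general A (fun i => (hmeas i).nullMeasurableSet) (fun i => (hmeas i).baireMeasurableSet)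
    hne hdisj hcover hadd
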